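/- Let T be a totally ergodic automorphism of a standard Borel probability space (X,μ) and let k ≥ 1. Let f : X → ℂ be such that there exist measurable f₀, …, f_k with |f_j| = 1 a.e., f_k = f, f_j∘T = f_{j-1}·f_j a.e. for 1 ≤ j ≤ k, and f₀ the constant c with |c| = 1 and cⁿ ≠ 1 for all integers n ≠ 0 (i.e., f ∈ E_k(T) \ E_{k-1}(T)). Let g : X → ℂ be such that there exist measurable g₀, …, g_k with |g_j| = 1 a.e., g_k = g, g_j∘T = g_{j-1}·g_j a.e. for 1 ≤ j ≤ k, and g₀ a constant of modulus 1 (i.e., g ∈ E_k(T)). Then there exists at most one pair (r,s) of coprime positive integers for which there exists an ergodic joining ρ of T^r and T^s with ∫_{X×X} f(x) conj(g(y)) dρ(x,y) ≠ 0. -/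

import Mathlib

/-!
Write `∂h = (h ∘ S) / h`. If the `k`-fold difference `∂ᵏ h` along `S` is the constant `c`, then
telescoping shows that the `k`-fold difference along `Sⁿ` is the constant `c ^ nᵏ`. Hence, on a
joining of `T^r` and `T^s`, the `k`-fold difference of `f(x) / g(y)` is the constant
`c ^ rᵏ / c' ^ sᵏ`.

A unimodular function whose `k`-fold difference is a constant of infinite order has mean zero, by
induction on `k`: an eigenfunction with eigenvalue `≠ 1` has mean zero, and for `k ≥ 2` the
`(k-1)`-fold differences of the correlations `(h ∘ Sⁿ) / h` are the constants `cⁿ`, so `h` is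
orthogonal to its translates and therefore, by Bessel's inequality, to the invariant vector `1`.

So a nonzero correlation forces `c ^ rᵏ / c' ^ sᵏ` to be a root of unity. If this happens for
`(r, s)` and `(r', s')`, eliminating `c'` makes `c ^ ((rs')ᵏ - (r's)ᵏ)` a root of unity, whence
`rs' = r's`.
-/

open MeasureTheory Filter

/-- `T` is totally ergodic: every nonzero power of `T` is ergodic. -/
def TotallyErgodic {X : Type*} [MeasurableSpace X] (T : X → X) (μ : Measure X) : Prop :=
  ∀ m : ℕ, m ≠ 0 → Ergodic (T^[m]) μ

section Arithmetic

theorem eq_and_eq_of_coprime_of_mul_eq_mul {r s r' s' : ℕ} (hco : r.Coprime s)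
    (hco' : r'.Coprime s') (h : r * s' = r' * s) : r = r' ∧ s = s' :=
  ⟨Nat.dvd_antisymm (hco.dvd_of_dvd_mul_right (Dvd.intro _ h))
      (hco'.dvd_of_dvd_mul_right (Dvd.intro _ h.symm)),
    Nat.dvd_antisymm (hco.symm.dvd_of_dvd_mul_left (Dvd.intro_left _ h.symm))
      (hco'.symm.dvd_of_dvd_mul_left (Dvd.intro_left _ h))⟩

theorem eq_of_isOfFinOrder_pow_div_pow {G : Type*} [Group G] {c : G} (hc : ¬IsOfFinOrder c)
    {m n : ℕ} (h : IsOfFinOrder (c ^ m / c ^ n)) : m = n := by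
  rw [← zpow_natCast, ← zpow_natCast, div_eq_mul_inv, ← zpow_sub, isOfFinOrder_iff_zpow_eq_one] at h
  obtain ⟨N, hN, hpow⟩ := h
  have hzero : ((m : ℤ) - n) * N = 0 := injective_zpow_iff_not_isOfFinOrder.mpr hc <| by
    simpa only [zpow_mul, zpow_zero] using hpow
  exact Nat.cast_injective (sub_eq_zero.mp ((mul_eq_zero.mp hzero).resolve_right hN))

theorem mul_eq_mul_of_isOfFinOrder_pow_div_pow {G : Type*} [CommGroup G] {c d : G}
    (hc : ¬IsOfFinOrder c) {a b a' b' : ℕ} (h : IsOfFinOrder (c ^ a / d ^ b))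
    (h' : IsOfFinOrder (c ^ a' / d ^ b')) : a * b' = a' * b := by
  have helim : (c ^ a / d ^ b) ^ b' * ((c ^ a' / d ^ b') ^ b)⁻¹ =
      c ^ (a * b') / c ^ (a' * b) := by
    rw [← div_eq_mul_inv, div_pow, div_pow, ← pow_mul, ← pow_mul, ← pow_mul, ← pow_mul,
      mul_comm b' b, div_div_div_cancel_right]
  exact eq_of_isOfFinOrder_pow_div_pow hc (helim ▸ h.pow.mul h'.pow.inv)

end Arithmetic

section Hilbert

variable {𝕜 E : Type*} [RCLike 𝕜] [NormedAddCommGroup E] [InnerProductSpace 𝕜 E]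

theorem orthonormal_iterate (U : E →ₗᵢ[𝕜] E) {v : E} (hv : ‖v‖ = 1)
    (horth : ∀ n ≠ 0, inner 𝕜 v (U^[n] v) = 0) : Orthonormal 𝕜 fun n => U^[n] v := by
  have hinner (m : ℕ) (x y : E) : inner 𝕜 (U^[m] x) (U^[m] y) = inner 𝕜 x y := by
    rw [← LinearIsometry.coe_pow, LinearIsometry.inner_map_map]
  have hlt (m n : ℕ) (hmn : m < n) : inner 𝕜 (U^[m] v) (U^[n] v) = 0 := by
    rw [← Nat.add_sub_cancel' hmn.le, Function.iterate_add_apply, hinner]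
    exact horth _ (Nat.sub_ne_zero_of_lt hmn)
  refine ⟨fun n => ?_, fun m n hmn => ?_⟩
  · simp only [← LinearIsometry.coe_pow, LinearIsometry.norm_map, hv]
  · obtain h | h := hmn.lt_or_gt
    · exact hlt m n h
    · exact inner_eq_zero_symm.mp (hlt n m h)

theorem inner_eq_zero_of_orthogonal_iterates (U : E →ₗᵢ[𝕜] E) {e v : E} (he : U e = e)
    (horth : ∀ n ≠ 0, inner 𝕜 v (U^[n] v) = 0) : inner 𝕜 e v = 0 := by
  obtain rfl | hv := eq_or_ne v 0
  · exact inner_zero_right e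
  have hiter (n : ℕ) : U^[n] ((‖v‖⁻¹ : 𝕜) • v) = (‖v‖⁻¹ : 𝕜) • U^[n] v := by
    rw [← LinearIsometry.coe_pow, map_smul]
  have hon := orthonormal_iterate U (norm_smul_inv_norm (𝕜 := 𝕜) hv) fun n hn => by
    rw [hiter, inner_smul_left, inner_smul_right, horth n hn, mul_zero, mul_zero]
  have hconst (n : ℕ) :
      inner 𝕜 (U^[n] ((‖v‖⁻¹ : 𝕜) • v)) e = inner 𝕜 ((‖v‖⁻¹ : 𝕜) • v) e := by
    conv_lhs => rw [← Function.iterate_fixed he n]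
    rw [← LinearIsometry.coe_pow, LinearIsometry.inner_map_map]
  have hsum := hon.inner_products_summable e
  simp only [hconst, summable_const_iff] at hsum
  simpa [inner_smul_left, hv, inner_eq_zero_symm] using hsum

end Hilbert

section MeanZero

variable {Y 𝕜 : Type*} [MeasurableSpace Y] [RCLike 𝕜] {S : Y → Y} {ν : Measure Y}

theorem integral_eq_zero_of_comp_ae_eq_smul {E : Type*} [NormedAddCommGroup E] [NormedSpace ℝ E]
    [NormedSpace 𝕜 E] (hS : MeasurePreserving S ν ν) {f : Y → E}
    (hf : AEStronglyMeasurable f ν) {c : 𝕜} (hc : c ≠ 1)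
    (h : ∀ᵐ y ∂ν, f (S y) = c • f y) : ∫ y, f y ∂ν = 0 := by
  have hfix : ∫ y, f y ∂ν = c • ∫ y, f y ∂ν :=
    calc ∫ y, f y ∂ν = ∫ y, f (S y) ∂ν := by
          conv_lhs => rw [← hS.map_eq]
          exact integral_map hS.aemeasurable (hS.map_eq.symm ▸ hf)
      _ = c • ∫ y, f y ∂ν := by rw [integral_congr_ae h, integral_smul]
  have hsub : (c - 1) • ∫ y, f y ∂ν = 0 := by rw [sub_smul, one_smul, ← hfix, sub_self]
  exact (smul_eq_zero.mp hsub).resolve_left (sub_ne_zero.mpr hc)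

theorem integral_eq_zero_of_orthogonal_iterates [IsFiniteMeasure ν] (hS : MeasurePreserving S ν ν)
    {f : Y → 𝕜} (hf : MemLp f 2 ν)
    (horth : ∀ n ≠ 0, ∫ y, f (S^[n] y) * (starRingEnd 𝕜) (f y) ∂ν = 0) : ∫ y, f y ∂ν = 0 := by
  let U := Lp.compMeasurePreservingₗᵢ (E := 𝕜) (p := 2) 𝕜 S hS
  have hU (n : ℕ) : U^[n] (hf.toLp f) = (hf.comp_measurePreserving (hS.iterate n)).toLp _ :=
    congrFun (Lp.compMeasurePreserving_iterate hS n) _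
  have hone : MemLp (fun _ : Y => (1 : 𝕜)) 2 ν := memLp_const 1
  have hzero := inner_eq_zero_of_orthogonal_iterates U (e := hone.toLp _) (v := hf.toLp f) rfl
    fun n hn => by
      rw [hU, L2.inner_def, ← horth n hn]
      refine integral_congr_ae ?_
      filter_upwards [hf.coeFn_toLp, (hf.comp_measurePreserving (hS.iterate n)).coeFn_toLp]
        with y h1 h2
      simp only [h1, h2, RCLike.inner_apply, Function.comp_apply]
  rw [← hzero, L2.inner_def]
  refine integral_congr_ae ?_
  filter_upwards [hone.coeFn_toLp, hf.coeFn_toLp] with y h1 h2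
  simp only [h1, h2, RCLike.inner_apply, map_one, mul_one]

end MeanZero

section MulDiff

variable {Y Z G : Type*} [CommGroup G]

/-- The multiplicative difference `h ↦ (h ∘ S) / h` along `S`, as an endomorphism of the group of
`G`-valued functions. -/
def mulDiff (S : Y → Y) : (Y → G) →* (Y → G) where
  toFun h y := h (S y) / h y
  map_one' := by ext; simp
  map_mul' h g := by ext; simp [mul_div_mul_comm]

theorem mulDiff_apply (S : Y → Y) (h : Y → G) (y : Y) : mulDiff S h y = h (S y) / h y := rfl

theorem mulDiff_iterate_succ (S : Y → Y) (h : Y → G) (n : ℕ) :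
    mulDiff S^[n + 1] h = mulDiff S^[n] h ∘ S * mulDiff S h := by
  ext y
  simp [mulDiff_apply]

theorem iterate_mulDiff_comp {S : Y → Y} {R : Z → Z} {π : Y → Z} (hπ : Function.Semiconj π S R)
    (u : Z → G) (j : ℕ) : (mulDiff S)^[j] (u ∘ π) = (mulDiff R)^[j] u ∘ π := by
  have hsemi : Function.Semiconj (fun u : Z → G => u ∘ π) (mulDiff R) (mulDiff S) := fun u => by
    ext y
    simp [mulDiff_apply, hπ.eq y]
  exact (hsemi.iterate_right j u).symm

end MulDiff

/-- `h` is a quasi-eigenfunction of order `j` of `S` if its `j`-fold multiplicative difference along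
`S` is almost everywhere the constant `c`; for `j = 1` it is an eigenfunction with eigenvalue `c`.
Taking values in a group `G` builds unimodularity into the case `G = Circle`. -/
def IsQuasiEigenfunction {Y G : Type*} [MeasurableSpace Y] [CommGroup G] (S : Y → Y)
    (ν : Measure Y) (j : ℕ) (c : G) (h : Y → G) : Prop :=
  (mulDiff S)^[j] h =ᵐ[ν] fun _ => c

namespace IsQuasiEigenfunction

variable {Y Z G : Type*} [MeasurableSpace Y] [MeasurableSpace Z] [CommGroup G] {S : Y → Y}
  {R : Z → Z} {ν : Measure Y} {κ : Measure Z} {π : Y → Z} {j : ℕ} {c d : G} {g h : Y → G}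

theorem mul (hg : IsQuasiEigenfunction S ν j c g) (hh : IsQuasiEigenfunction S ν j d h) :
    IsQuasiEigenfunction S ν j (c * d) (g * h) := by
  rw [IsQuasiEigenfunction, iterate_map_mul]
  exact EventuallyEq.mul hg hh

theorem div (hg : IsQuasiEigenfunction S ν j c g) (hh : IsQuasiEigenfunction S ν j d h) :
    IsQuasiEigenfunction S ν j (c / d) (g / h) := by
  rw [IsQuasiEigenfunction, iterate_map_div]
  exact EventuallyEq.div hg hh

theorem comp {u : Z → G} (hu : IsQuasiEigenfunction R κ j c u)
    (hπ : Measure.QuasiMeasurePreserving π ν κ) (hsemi : Function.Semiconj π S R) :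
    IsQuasiEigenfunction S ν j c (u ∘ π) := by
  rw [IsQuasiEigenfunction, iterate_mulDiff_comp hsemi]
  exact hπ.ae_eq_comp hu

theorem congr (hS : Measure.QuasiMeasurePreserving S ν ν) (hg : IsQuasiEigenfunction S ν j c g)
    (hgh : g =ᵐ[ν] h) : IsQuasiEigenfunction S ν j c h := by
  induction j generalizing g h with
  | zero => exact hgh.symm.trans hg
  | succ j ih => exact ih (g := mulDiff S g) hg ((hS.ae_eq_comp hgh).div hgh)

theorem mulDiff_iterate (hS : Measure.QuasiMeasurePreserving S ν ν)
    (hh : IsQuasiEigenfunction S ν (j + 1) c h) (n : ℕ) :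
    IsQuasiEigenfunction S ν j (c ^ n) (mulDiff S^[n] h) := by
  induction n with
  | zero =>
    have hone : mulDiff S^[0] h = 1 := funext fun y => div_self' (h y)
    rw [IsQuasiEigenfunction, hone, iterate_map_one, pow_zero]
    rfl
  | succ n ih =>
    rw [mulDiff_iterate_succ, pow_succ]
    exact (ih.comp hS fun _ => rfl).mul hh

theorem iterate (hS : Measure.QuasiMeasurePreserving S ν ν)
    (hh : IsQuasiEigenfunction S ν j c h) (n : ℕ) :
    IsQuasiEigenfunction S^[n] ν j (c ^ n ^ j) h := by
  induction j generalizing h c with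
  | zero =>
    rw [pow_zero, pow_one]
    exact hh
  | succ j ih =>
    rw [pow_succ', pow_mul]
    exact ih (hh.mulDiff_iterate hS n)

theorem of_chain (hS : Measure.QuasiMeasurePreserving S ν ν) {H : ℕ → Y → G} {k : ℕ}
    (hzero : H 0 =ᵐ[ν] fun _ => c)
    (hsucc : ∀ j < k, ∀ᵐ y ∂ν, H (j + 1) (S y) = H j y * H (j + 1) y) :
    IsQuasiEigenfunction S ν k c (H k) := by
  induction k with
  | zero => exact hzero
  | succ k ih =>
    refine congr (j := k) hS (ih fun j hj => hsucc j (hj.trans k.lt_succ_self)) ?_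
    filter_upwards [hsucc k k.lt_succ_self] with y hy
    rw [mulDiff_apply, hy, mul_div_cancel_right]

theorem integral_eq_zero [IsFiniteMeasure ν] (hS : MeasurePreserving S ν ν) {c : Circle}
    {h : Y → Circle} (hmeas : AEStronglyMeasurable h ν) (hc : ¬IsOfFinOrder c) (hj : j ≠ 0)
    (hh : IsQuasiEigenfunction S ν j c h) : ∫ y, (h y : ℂ) ∂ν = 0 := by
  have hcoe {u : Y → Circle} (hu : AEStronglyMeasurable u ν) :
      AEStronglyMeasurable (fun y => (u y : ℂ)) ν :=
    continuous_subtype_val.comp_aestronglyMeasurable hu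
  obtain ⟨j, rfl⟩ := Nat.exists_eq_succ_of_ne_zero hj
  clear hj
  induction j generalizing h c with
  | zero =>
    have hc1 : (c : ℂ) ≠ 1 := fun h1 => hc (Circle.coe_eq_one.mp h1 ▸ IsOfFinOrder.one)
    refine integral_eq_zero_of_comp_ae_eq_smul hS (hcoe hmeas) hc1 ?_
    filter_upwards [hh] with y hy
    rw [smul_eq_mul, ← Circle.coe_mul, ← div_eq_iff_eq_mul.mp hy]
  | succ j ih =>
    refine integral_eq_zero_of_orthogonal_iterates hS
      (MemLp.of_bound (hcoe hmeas) 1 (.of_forall fun y => (h y).norm_coe.le)) fun n hn => ?_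
    have hmean := ih ((hmeas.comp_measurePreserving (hS.iterate n)).div hmeas)
      (fun hfin => hc (hfin.of_pow hn)) (hh.mulDiff_iterate hS.quasiMeasurePreserving n)
    simpa [div_eq_mul_inv, mulDiff_apply, ← Circle.coe_inv_eq_conj] using hmean

end IsQuasiEigenfunction

section Phase

/-- The phase of a complex number, as a point of the unit circle; the phase of `0` is `1`. -/
noncomputable def phase (z : ℂ) : Circle :=
  Circle.exp z.arg

theorem phase_coe (z : Circle) : phase z = z :=
  Circle.exp_arg z

theorem coe_phase {z : ℂ} (hz : ‖z‖ = 1) : (phase z : ℂ) = z := by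
  simpa [phase, hz] using Complex.norm_mul_exp_arg_mul_I z

theorem phase_mul {z w : ℂ} (hz : z ≠ 0) (hw : w ≠ 0) : phase (z * w) = phase z * phase w := by
  simp only [phase, ← Real.Angle.toCircle_coe, Complex.arg_mul_coe_angle hz hw,
    Real.Angle.toCircle_add]

theorem aestronglyMeasurable_phase_comp {Y : Type*} [MeasurableSpace Y] {ν : Measure Y} {f : Y → ℂ}
    (hf : AEMeasurable f ν) : AEStronglyMeasurable (fun y => phase (f y)) ν :=
  Circle.exp.continuous.comp_aestronglyMeasurable
    (Complex.measurable_arg.comp_aemeasurable hf).aestronglyMeasurable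

end Phase

/-- The functions `F 0, …, F k` witness that `F k` belongs to `E_k(S)`, with bottom constant `c`.
Functions `F j` with `k < j` are irrelevant. -/
structure IsQuasiEigenfunctionChain {X : Type*} [MeasurableSpace X] (S : X → X) (μ : Measure X)
    (k : ℕ) (c : Circle) (F : ℕ → X → ℂ) : Prop where
  aemeasurable : AEMeasurable (F k) μ
  norm_eq_one : ∀ j ≤ k, ∀ᵐ x ∂μ, ‖F j x‖ = 1
  zero : ∀ᵐ x ∂μ, F 0 x = c
  succ : ∀ j < k, ∀ᵐ x ∂μ, F (j + 1) (S x) = F j x * F (j + 1) x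

theorem IsQuasiEigenfunctionChain.isQuasiEigenfunction_phase {X : Type*} [MeasurableSpace X]
    {S : X → X} {μ : Measure X} {k : ℕ} {c : Circle} {F : ℕ → X → ℂ}
    (hS : Measure.QuasiMeasurePreserving S μ μ) (hF : IsQuasiEigenfunctionChain S μ k c F) :
    IsQuasiEigenfunction S μ k c fun x => phase (F k x) := by
  refine .of_chain (H := fun j x => phase (F j x)) hS ?_ fun j hj => ?_
  · filter_upwards [hF.zero] with x hx
    rw [hx, phase_coe]
  · filter_upwards [hF.succ j hj, hF.norm_eq_one j hj.le, hF.norm_eq_one (j + 1) hj]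
      with x hx hnorm hnorm'
    have hne {z : ℂ} (hz : ‖z‖ = 1) : z ≠ 0 := norm_ne_zero_iff.mp (hz ▸ one_ne_zero)
    rw [hx, phase_mul (hne hnorm) (hne hnorm')]

section Joining

/-- `ρ` is a joining of the systems `(X, μ, S)` and `(Y, ν, R)`. Ergodicity is not part of the
definition. -/
structure IsJoining {X Y : Type*} [MeasurableSpace X] [MeasurableSpace Y] (ρ : Measure (X × Y))
    (S : X → X) (μ : Measure X) (R : Y → Y) (ν : Measure Y) : Prop where
  fst : MeasurePreserving Prod.fst ρ μ
  snd : MeasurePreserving Prod.snd ρ ν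
  map : MeasurePreserving (Prod.map S R) ρ ρ

variable {X Y : Type*} [MeasurableSpace X] [MeasurableSpace Y] {μ : Measure X} {ν : Measure Y}
  [IsFiniteMeasure μ] {S : X → X} {R : Y → Y} {k : ℕ} {c d : Circle}

theorem IsJoining.isOfFinOrder_of_integral_ne_zero (hS : MeasurePreserving S μ μ)
    (hR : MeasurePreserving R ν ν) (hk : k ≠ 0) {f : X → Circle} {g : Y → Circle}
    (hfmeas : AEStronglyMeasurable f μ)
    (hgmeas : AEStronglyMeasurable g ν) (hf : IsQuasiEigenfunction S μ k c f)
    (hg : IsQuasiEigenfunction R ν k d g) {r s : ℕ} {ρ : Measure (X × Y)}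
    (hρ : IsJoining ρ S^[r] μ R^[s] ν)
    (hne : ∫ p, (f p.1 : ℂ) * (starRingEnd ℂ) (g p.2 : ℂ) ∂ρ ≠ 0) :
    IsOfFinOrder (c ^ r ^ k / d ^ s ^ k) := by
  have : IsFiniteMeasure (ρ.map Prod.fst) := hρ.fst.map_eq.symm ▸ ‹IsFiniteMeasure μ›
  have : IsFiniteMeasure ρ := Measure.isFiniteMeasure_of_map measurable_fst.aemeasurable
  have hf' := (hf.iterate hS.quasiMeasurePreserving r).comp (S := Prod.map S^[r] R^[s])
    hρ.fst.quasiMeasurePreserving fun _ => rfl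
  have hg' := (hg.iterate hR.quasiMeasurePreserving s).comp (S := Prod.map S^[r] R^[s])
    hρ.snd.quasiMeasurePreserving fun _ => rfl
  have hmeas := (hfmeas.comp_measurePreserving hρ.fst).div
    (hgmeas.comp_measurePreserving hρ.snd)
  by_contra hinf
  refine hne ?_
  simpa [div_eq_mul_inv, ← Circle.coe_inv_eq_conj] using
    (hf'.div hg').integral_eq_zero hρ.map hmeas hinf hk

theorem IsJoining.isOfFinOrder_of_integral_chain_ne_zero (hS : MeasurePreserving S μ μ)
    (hR : MeasurePreserving R ν ν) (hk : k ≠ 0) {F : ℕ → X → ℂ} {G : ℕ → Y → ℂ}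
    (hF : IsQuasiEigenfunctionChain S μ k c F) (hG : IsQuasiEigenfunctionChain R ν k d G)
    {r s : ℕ} {ρ : Measure (X × Y)} (hρ : IsJoining ρ S^[r] μ R^[s] ν)
    (hne : ∫ p, F k p.1 * (starRingEnd ℂ) (G k p.2) ∂ρ ≠ 0) :
    IsOfFinOrder (c ^ r ^ k / d ^ s ^ k) := by
  refine hρ.isOfFinOrder_of_integral_ne_zero hS hR hk
    (aestronglyMeasurable_phase_comp hF.aemeasurable)
    (aestronglyMeasurable_phase_comp hG.aemeasurable)
    (hF.isQuasiEigenfunction_phase hS.quasiMeasurePreserving)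
    (hG.isQuasiEigenfunction_phase hR.quasiMeasurePreserving) ?_
  convert hne using 1
  refine integral_congr_ae ?_
  filter_upwards [hρ.fst.quasiMeasurePreserving.ae (hF.norm_eq_one k le_rfl),
    hρ.snd.quasiMeasurePreserving.ae (hG.norm_eq_one k le_rfl)] with p hp hp'
  rw [coe_phase hp, coe_phase hp']

theorem at_most_one_pair_with_nonorthogonal_joining_general (hS : MeasurePreserving S μ μ)
    (hR : MeasurePreserving R ν ν) (hk : k ≠ 0) (hc : ¬IsOfFinOrder c) {F : ℕ → X → ℂ}
    {G : ℕ → Y → ℂ} (hF : IsQuasiEigenfunctionChain S μ k c F)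
    (hG : IsQuasiEigenfunctionChain R ν k d G) {r s r' s' : ℕ} (hco : r.Coprime s)
    (hco' : r'.Coprime s') {ρ ρ' : Measure (X × Y)} (hρ : IsJoining ρ S^[r] μ R^[s] ν)
    (hne : ∫ p, F k p.1 * (starRingEnd ℂ) (G k p.2) ∂ρ ≠ 0)
    (hρ' : IsJoining ρ' S^[r'] μ R^[s'] ν)
    (hne' : ∫ p, F k p.1 * (starRingEnd ℂ) (G k p.2) ∂ρ' ≠ 0) :
    r = r' ∧ s = s' := by
  have hpow : r ^ k * s' ^ k = r' ^ k * s ^ k := mul_eq_mul_of_isOfFinOrder_pow_div_pow hc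
    (hρ.isOfFinOrder_of_integral_chain_ne_zero hS hR hk hF hG hne)
    (hρ'.isOfFinOrder_of_integral_chain_ne_zero hS hR hk hF hG hne')
  rw [← mul_pow, ← mul_pow] at hpow
  exact eq_and_eq_of_coprime_of_mul_eq_mul hco hco' (Nat.pow_left_injective hk hpow)

end Joining

/-- **Proposition 3.4.** Let `T` be a totally ergodic automorphism of a standard Borel
probability space, `k ≥ 1`, `f ∈ E_k(T) \ E_{k-1}(T)` (witnessed by a chain `f₀, …, f_k`
with `f₀` an irrational constant `c`) and `g ∈ E_k(T)` (witnessed by a chain `g₀, …, g_k`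
with `g₀` a constant of modulus 1). Then there is at most one pair `(r,s)` of coprime
positive integers admitting an ergodic joining `ρ` of `T^r` and `T^s` with
`∫ f(x) conj(g(y)) dρ ≠ 0`. -/
theorem at_most_one_pair_with_nonorthogonal_joining
    {X : Type*} [MeasurableSpace X] [StandardBorelSpace X]
    (μ : Measure X) [IsProbabilityMeasure μ] (T : X ≃ᵐ X)
    (hT : MeasurePreserving T μ μ)
    (hTerg : TotallyErgodic (⇑T) μ)
    (k : ℕ) (hk : 1 ≤ k)
    (f : X → ℂ) (F : ℕ → X → ℂ)
    (hFmeas : ∀ j ≤ k, Measurable (F j))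
    (hFmod : ∀ j ≤ k, ∀ᵐ x ∂μ, ‖F j x‖ = 1)
    (hFk : F k = f)
    (c : ℂ) (hc : ‖c‖ = 1) (hcirr : ∀ n : ℤ, n ≠ 0 → c ^ n ≠ 1)
    (hF0 : ∀ x, F 0 x = c)
    (hFchain : ∀ j, 1 ≤ j → j ≤ k → ∀ᵐ x ∂μ, F j (T x) = F (j - 1) x * F j x)
    (g : X → ℂ) (G : ℕ → X → ℂ)
    (hGmeas : ∀ j ≤ k, Measurable (G j))
    (hGmod : ∀ j ≤ k, ∀ᵐ x ∂μ, ‖G j x‖ = 1)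
    (hGk : G k = g)
    (c' : ℂ) (hc' : ‖c'‖ = 1)
    (hG0 : ∀ x, G 0 x = c')
    (hGchain : ∀ j, 1 ≤ j → j ≤ k → ∀ᵐ x ∂μ, G j (T x) = G (j - 1) x * G j x)
    (r s r' s' : ℕ) (hr : 0 < r) (hs : 0 < s) (hr' : 0 < r') (hs' : 0 < s')
    (hco : Nat.Coprime r s) (hco' : Nat.Coprime r' s')
    (hρ : ∃ ρ : Measure (X × X), IsProbabilityMeasure ρ ∧
      ρ.map Prod.fst = μ ∧ ρ.map Prod.snd = μ ∧
      Ergodic (Prod.map ((⇑T)^[r]) ((⇑T)^[s])) ρ ∧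
      (∫ p, f p.1 * (starRingEnd ℂ) (g p.2) ∂ρ) ≠ 0)
    (hρ' : ∃ ρ : Measure (X × X), IsProbabilityMeasure ρ ∧
      ρ.map Prod.fst = μ ∧ ρ.map Prod.snd = μ ∧
      Ergodic (Prod.map ((⇑T)^[r']) ((⇑T)^[s'])) ρ ∧
      (∫ p, f p.1 * (starRingEnd ℂ) (g p.2) ∂ρ) ≠ 0) :
    r = r' ∧ s = s' := by
  subst hFk hGk
  obtain ⟨c, rfl⟩ : ∃ z : Circle, (z : ℂ) = c := ⟨phase c, coe_phase hc⟩
  obtain ⟨c', rfl⟩ : ∃ z : Circle, (z : ℂ) = c' := ⟨phase c', coe_phase hc'⟩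
  have hcinf : ¬IsOfFinOrder c := fun hfin => by
    obtain ⟨n, hn, hpow⟩ := isOfFinOrder_iff_zpow_eq_one.mp hfin
    exact hcirr n hn (by rw [← Circle.coe_zpow, hpow, Circle.coe_one])
  have hF : IsQuasiEigenfunctionChain T μ k c F := ⟨(hFmeas k le_rfl).aemeasurable, hFmod,
    .of_forall hF0, fun j hj => hFchain (j + 1) j.succ_pos hj⟩
  have hG : IsQuasiEigenfunctionChain T μ k c' G := ⟨(hGmeas k le_rfl).aemeasurable, hGmod,
    .of_forall hG0, fun j hj => hGchain (j + 1) j.succ_pos hj⟩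
  obtain ⟨ρ, -, hfst, hsnd, herg, hne⟩ := hρ
  obtain ⟨ρ', -, hfst', hsnd', herg', hne'⟩ := hρ'
  exact at_most_one_pair_with_nonorthogonal_joining_general hT hT (Nat.one_le_iff_ne_zero.mp hk)
    hcinf hF hG hco hco'
    ⟨⟨measurable_fst, hfst⟩, ⟨measurable_snd, hsnd⟩, herg.toMeasurePreserving⟩ hne
    ⟨⟨measurable_fst, hfst'⟩, ⟨measurable_snd, hsnd'⟩, herg'.toMeasurePreserving⟩ hne'
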